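/- Let r ≥ 2 and let k_i, k_i' ≥ 0 for 2 ≤ i ≤ r − 1 and j_1 ≥ 1 odd, with j_i := k_i + k_i' for 2 ≤ i ≤ r − 1 and j_{r−1} ≥ 1. Let n = 2^{r−1} j_{r−1} + ⋯ + 4 j_2 + 2 j_1 + 1, and let B ∈ GL(n, ℤ) be the block-diagonal matrix B = diag(C_{r−1}, …, C_{r−1} (k_{r−1} copies), J_{r−1}, …, J_{r−1} (k_{r−1}' copies), …, C_2, …, C_2 (k_2 copies), J_2, …, J_2 (k_2' copies), J_1, …, J_1 (j_1 copies), 1). Let Γ be the subgroup of the group of affine bijections of ℝ^n generated by γ : x ↦ Bx + (1/2^r) e_n together with all translations by vectors in ℤ^n. Then the abelianization of Γ is isomorphic to ℤ × (ℤ/2ℤ)^{j_{r−1} + ⋯ + j_2 + j_1}. -/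

import Mathlib

open Matrix

/-- `Cmat r` is the `2^r × 2^r` companion matrix of `X^(2^r) + 1`. -/
def Cmat (r : ℕ) : Matrix (Fin (2 ^ r)) (Fin (2 ^ r)) ℤ :=
  Matrix.of fun i j =>
    if (i : ℕ) = (j : ℕ) + 1 then 1
    else if (i : ℕ) = 0 ∧ (j : ℕ) = 2 ^ r - 1 then -1
    else 0

/-- The matrices `J_r`, defined recursively: `J_0 = (−1)` and
`J_{r+1} = [[0, J_r], [I, 0]]` as a `2^(r+1) × 2^(r+1)` block matrix. -/
def Jmat : (r : ℕ) → Matrix (Fin (2 ^ r)) (Fin (2 ^ r)) ℤ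
  | 0 => Matrix.of fun _ _ => -1
  | (r + 1) =>
      Matrix.reindex
        ((finSumFinEquiv (m := 2 ^ r) (n := 2 ^ r)).trans
          (finCongr (show 2 ^ r + 2 ^ r = 2 ^ (r + 1) by rw [pow_succ]; omega)))
        ((finSumFinEquiv (m := 2 ^ r) (n := 2 ^ r)).trans
          (finCongr (show 2 ^ r + 2 ^ r = 2 ^ (r + 1) by rw [pow_succ]; omega)))
        (Matrix.fromBlocks 0 (Jmat r) 1 0)

/-- Index type for the diagonal blocks of the matrix
`B = diag(C_{r−1} (k_{r−1} copies), J_{r−1} (k'_{r−1} copies), …,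
C_2 (k_2 copies), J_2 (k'_2 copies), J_1 (j₁ copies), 1)`:
for each `i` with `2 ≤ i ≤ r − 1` (encoded as `i₀ + 2` with `i₀ : Fin (r − 2)`) there are
`k i` blocks `C_i` and `k' i` blocks `J_i`; then `j₁` blocks `J_1`; then one `1 × 1` block. -/
abbrev BlockIx (r : ℕ) (k k' : ℕ → ℕ) (j₁ : ℕ) : Type :=
  (Σ i : Fin (r - 2), (Fin (k (i.val + 2)) ⊕ Fin (k' (i.val + 2)))) ⊕ (Fin j₁ ⊕ Unit)

/-- The size of each diagonal block. -/
def blockSize (r : ℕ) (k k' : ℕ → ℕ) (j₁ : ℕ) : BlockIx r k k' j₁ → ℕ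
  | Sum.inl ⟨i, _⟩ => 2 ^ (i.val + 2)
  | Sum.inr (Sum.inl _) => 2 ^ 1
  | Sum.inr (Sum.inr _) => 2 ^ 0

/-- The diagonal blocks themselves. -/
def blockMat (r : ℕ) (k k' : ℕ → ℕ) (j₁ : ℕ) :
    (x : BlockIx r k k' j₁) →
      Matrix (Fin (blockSize r k k' j₁ x)) (Fin (blockSize r k k' j₁ x)) ℤ
  | Sum.inl ⟨i, Sum.inl _⟩ => Cmat (i.val + 2)
  | Sum.inl ⟨i, Sum.inr _⟩ => Jmat (i.val + 2)
  | Sum.inr (Sum.inl _) => Jmat 1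
  | Sum.inr (Sum.inr _) => 1

/-!
Write `L = ℤ^n` and let `T v` be the translation by `v`. Since `γ T(v) γ⁻¹ = T(Bv)`, the
commutator subgroup of `Γ` is `T((B - 1)L)`, so the abelianization is generated by the coinvariants
`L / (B - 1)L` and the class of `γ`, subject to `γ ^ 2^r = T(eₙ)`. A block `C_i` or `J_i` has
coinvariants `ℤ/2`, through the parity of the sum of the coordinates. The `1 × 1` block has
coinvariants `ℤ`, generated by `eₙ`; adjoining a `2^r`-th root of `eₙ` gives `ℤ` again.
-/

section GroupTheory

variable {Γ L A : Type*} [Group Γ] [CommGroup L] [CommGroup A]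
  {t : L →* Γ} {γ : Γ} {b : L ≃* L}

theorem isMulCommutative_of_closure_eq_top {S : Set Γ} (hgen : Subgroup.closure S = ⊤)
    (hcomm : ∀ x ∈ S, ∀ y ∈ S, x * y = y * x) : IsMulCommutative Γ := by
  have := Subgroup.isMulCommutative_closure hcomm
  rw [hgen] at this
  exact .of_comm fun x y => setLike_mul_comm (Subgroup.mem_top x) (Subgroup.mem_top y)

theorem normal_range_comp_div_id (hconj : ∀ x, γ * t x * γ⁻¹ = t (b x))
    (hgen : Subgroup.closure ({γ} ∪ Set.range t) = ⊤) :
    (t.comp (b.toMonoidHom / MonoidHom.id L)).range.Normal := by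
  have hγ : (MulAut.conj γ : Γ →* Γ).comp (t.comp (b.toMonoidHom / MonoidHom.id L)) =
      (t.comp (b.toMonoidHom / MonoidHom.id L)).comp b.toMonoidHom := by
    ext x
    simpa using hconj (b x / x)
  have ht (y : L) : (MulAut.conj (t y) : Γ →* Γ).comp t = t := by
    ext x
    simp [← map_mul, ← map_inv, mul_comm y x]
  rw [← Subgroup.normalizer_eq_top_iff, eq_top_iff, ← hgen, Subgroup.closure_le,
    Set.union_subset_iff, Set.singleton_subset_iff, Set.range_subset_iff]
  constructor
  · rw [SetLike.mem_coe, Subgroup.mem_normalizer_iff_map_conj_eq, MonoidHom.map_range, hγ,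
      MonoidHom.range_comp, MonoidHom.range_eq_top_of_surjective _ b.surjective,
      ← MonoidHom.range_eq_map]
  · intro y
    rw [SetLike.mem_coe, Subgroup.mem_normalizer_iff_map_conj_eq, MonoidHom.map_range,
      ← MonoidHom.comp_assoc, ht]

theorem commutator_eq_range_comp_div_id (hconj : ∀ x, γ * t x * γ⁻¹ = t (b x))
    (hgen : Subgroup.closure ({γ} ∪ Set.range t) = ⊤) :
    commutator Γ = (t.comp (b.toMonoidHom / MonoidHom.id L)).range := by
  have hnormal := normal_range_comp_div_id hconj hgen
  set D := (t.comp (b.toMonoidHom / MonoidHom.id L)).range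
  apply le_antisymm
  · rw [← Subgroup.Normal.quotient_commutative_iff_commutator_le]
    let π := QuotientGroup.mk' D
    have hγt (x : L) : π γ * π (t x) = π (t x) * π γ := by
      have hx : π (t (b x)) = π (t x) := by
        rw [← div_eq_one, ← map_div, ← map_div, ← MonoidHom.mem_ker, QuotientGroup.ker_mk']
        exact ⟨x, rfl⟩
      rw [← mul_inv_eq_iff_eq_mul, ← map_mul, ← map_inv, ← map_mul, hconj, hx]
    have htt (x y : L) : π (t x) * π (t y) = π (t y) * π (t x) := by
      rw [← map_mul, ← map_mul, mul_comm, map_mul, map_mul]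
    apply isMulCommutative_of_closure_eq_top (S := π '' ({γ} ∪ Set.range t))
    · rw [← MonoidHom.map_closure, hgen, ← MonoidHom.range_eq_map,
        MonoidHom.range_eq_top_of_surjective _ (QuotientGroup.mk'_surjective D)]
    · rintro _ ⟨_, rfl | ⟨x, rfl⟩, rfl⟩ _ ⟨_, rfl | ⟨y, rfl⟩, rfl⟩
      exacts [rfl, hγt y, (hγt x).symm, htt x y]
  · rintro _ ⟨x, rfl⟩
    have h := Subgroup.commutator_mem_commutator (Subgroup.mem_top γ) (Subgroup.mem_top (t x))
    rw [commutatorElement_def, hconj, ← map_inv, ← map_mul, ← div_eq_mul_inv] at h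
    exact h

theorem nonempty_mulEquiv_of_surjective_of_ker_eq {G H K : Type*} [Group G] [Group H] [Group K]
    {f : G →* H} {g : G →* K} (hf : Function.Surjective f) (hg : Function.Surjective g)
    (h : f.ker = g.ker) : Nonempty (H ≃* K) :=
  ⟨(QuotientGroup.quotientKerEquivOfSurjective f hf).symm.trans
    ((QuotientGroup.quotientMulEquivOfEq h).trans
      (QuotientGroup.quotientKerEquivOfSurjective g hg))⟩

theorem nonempty_abelianization_mulEquiv (hconj : ∀ x, γ * t x * γ⁻¹ = t (b x))
    (hgen : Subgroup.closure ({γ} ∪ Set.range t) = ⊤) (f : L →* A) (a : A)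
    (hsurj : ∀ y, ∃ x, ∃ m : ℤ, f x * a ^ m = y)
    (hker : ∀ x (m : ℤ), (∃ y, t (b y / y) = t x * γ ^ m) ↔ f x * a ^ m = 1) :
    Nonempty (Abelianization Γ ≃* A) := by
  let F : L × Multiplicative ℤ →* Abelianization Γ :=
    (Abelianization.of.comp t).coprod (zpowersHom _ (Abelianization.of γ))
  let G : L × Multiplicative ℤ →* A := f.coprod (zpowersHom _ a)
  refine nonempty_mulEquiv_of_surjective_of_ker_eq (f := F) (g := G) ?_ ?_ ?_
  · have hF : (⊤ : Subgroup Γ).map Abelianization.of ≤ F.range := by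
      rw [← hgen, MonoidHom.map_closure, Subgroup.closure_le]
      rintro _ ⟨_, rfl | ⟨x, rfl⟩, rfl⟩
      · exact ⟨(1, Multiplicative.ofAdd 1), by simp [F]⟩
      · exact ⟨(x, 1), by simp [F]⟩
    intro y
    obtain ⟨g, rfl⟩ := QuotientGroup.mk_surjective y
    exact hF ⟨g, Subgroup.mem_top g, rfl⟩
  · intro y
    obtain ⟨x, m, rfl⟩ := hsurj y
    exact ⟨(x, Multiplicative.ofAdd m), by simp [G]⟩
  · ext ⟨x, m⟩
    have hF : F (x, m) = Abelianization.of (t x * γ ^ m.toAdd) := by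
      simp [F]
    have hG : G (x, m) = f x * a ^ m.toAdd := by simp [G]
    rw [MonoidHom.mem_ker, MonoidHom.mem_ker, hF, hG, ← hker, ← MonoidHom.mem_ker,
      Abelianization.ker_of, commutator_eq_range_comp_div_id hconj hgen]
    rfl

theorem nonempty_abelianization_closure_mulEquiv (hconj : ∀ x, γ * t x * γ⁻¹ = t (b x))
    (f : L →* A) (a : A) (hsurj : ∀ y, ∃ x, ∃ m : ℤ, f x * a ^ m = y)
    (hker : ∀ x (m : ℤ), (∃ y, t (b y / y) = t x * γ ^ m) ↔ f x * a ^ m = 1) :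
    Nonempty (Abelianization (Subgroup.closure ({γ} ∪ Set.range t)) ≃* A) := by
  let S : Set Γ := {γ} ∪ Set.range t
  have ht (x : L) : t x ∈ Subgroup.closure S := Subgroup.subset_closure (.inr ⟨x, rfl⟩)
  let γ' : Subgroup.closure S := ⟨γ, Subgroup.subset_closure (.inl rfl)⟩
  let t' : L →* Subgroup.closure S := t.codRestrict _ ht
  have hpreimage : ((↑) : Subgroup.closure S → Γ) ⁻¹' S = {γ'} ∪ Set.range t' := by
    ext x
    exact or_congr (Subtype.ext_iff (a1 := x) (a2 := γ')).symm
      (exists_congr fun y => (Subtype.ext_iff (a1 := t' y) (a2 := x)).symm)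
  have hgen : Subgroup.closure ({γ'} ∪ Set.range t') = ⊤ := by
    rw [← hpreimage, Subgroup.closure_closure_coe_preimage]
  refine nonempty_abelianization_mulEquiv (b := b) (fun x => Subtype.ext (hconj x)) hgen f a hsurj
    fun x m => ?_
  rw [← hker]
  exact exists_congr fun y => Subtype.ext_iff

end GroupTheory

section Coboundaries

variable {ι κ R : Type*} [Fintype ι] [DecidableEq ι] [Fintype κ] [DecidableEq κ] [CommRing R]

/-- The image of `M - 1`: the submodule by which one divides `R^ι` to get the coinvariants of the
action of `M`. -/
def coboundaries (M : Matrix ι ι R) : Submodule R (ι → R) :=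
  LinearMap.range (M - 1).mulVecLin

theorem mem_coboundaries {M : Matrix ι ι R} {v : ι → R} :
    v ∈ coboundaries M ↔ ∃ w, M *ᵥ w - w = v := by
  simp [coboundaries]

theorem mem_coboundaries_one {v : ι → R} : v ∈ coboundaries (1 : Matrix ι ι R) ↔ v = 0 := by
  simp [coboundaries]

theorem mem_coboundaries_reindex {M : Matrix ι ι R} (e : ι ≃ κ) {v : κ → R} :
    v ∈ coboundaries (Matrix.reindex e e M) ↔ v ∘ e ∈ coboundaries M := by
  simp only [mem_coboundaries, Matrix.reindex_apply]
  constructor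
  · rintro ⟨w, rfl⟩
    refine ⟨w ∘ e, ?_⟩
    ext i
    simp [Matrix.submatrix_mulVec_equiv]
  · rintro ⟨w, hw⟩
    refine ⟨w ∘ e.symm, ?_⟩
    rw [← e.surjective.right_cancellable, ← hw]
    ext i
    simp [Matrix.submatrix_mulVec_equiv, Function.comp_def]

theorem mem_coboundaries_fromBlocks_zero {M : Matrix ι ι R} {v : ι ⊕ ι → R} :
    v ∈ coboundaries (Matrix.fromBlocks 0 M 1 0) ↔ v ∘ Sum.inl + v ∘ Sum.inr ∈ coboundaries M := by
  simp only [mem_coboundaries]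
  constructor
  · rintro ⟨w, rfl⟩
    refine ⟨w ∘ Sum.inr, ?_⟩
    ext i
    simp [Matrix.fromBlocks_mulVec]
  · rintro ⟨w, hw⟩
    refine ⟨Sum.elim (v ∘ Sum.inr + w) w, ?_⟩
    have hinl : M *ᵥ w - (v ∘ Sum.inr + w) = v ∘ Sum.inl := by
      rw [add_comm, ← sub_sub, hw, add_sub_cancel_right]
    ext (i | i)
    · simpa [Matrix.fromBlocks_mulVec] using congrFun hinl i
    · simp [Matrix.fromBlocks_mulVec]

theorem blockDiagonal'_mulVec_apply {X : Type*} [Fintype X] [DecidableEq X] {s : X → Type*}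
    [∀ x, Fintype (s x)] (M : ∀ x, Matrix (s x) (s x) R)
    (v : (Σ x, s x) → R) (x : X) (i : s x) :
    (Matrix.blockDiagonal' M *ᵥ v) ⟨x, i⟩ = (M x *ᵥ fun i => v ⟨x, i⟩) i := by
  simp only [Matrix.mulVec, dotProduct, Fintype.sum_sigma]
  rw [Finset.sum_eq_single x]
  · simp
  · intro y _ hy
    simp [Matrix.blockDiagonal'_apply_ne _ _ _ hy.symm]
  · simp

theorem mem_coboundaries_blockDiagonal' {X : Type*} [Fintype X] [DecidableEq X] {s : X → Type*}
    [∀ x, Fintype (s x)] [∀ x, DecidableEq (s x)] {M : ∀ x, Matrix (s x) (s x) R}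
    {v : (Σ x, s x) → R} :
    v ∈ coboundaries (Matrix.blockDiagonal' M) ↔ ∀ x, (fun i => v ⟨x, i⟩) ∈ coboundaries (M x) := by
  simp only [mem_coboundaries]
  constructor
  · rintro ⟨w, rfl⟩ x
    refine ⟨fun i => w ⟨x, i⟩, ?_⟩
    ext i
    simp [blockDiagonal'_mulVec_apply]
  · intro h
    choose w hw using h
    refine ⟨fun p => w p.1 p.2, ?_⟩
    ext ⟨x, i⟩
    simpa [blockDiagonal'_mulVec_apply] using congrFun (hw x) i

end Coboundaries

section AffineGroups

variable {ι : Type*}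

/-- The inclusion of the lattice `ℤ^ι` into `ℝ^ι`. -/
def latticeEmbedding (ι : Type*) : (ι → ℤ) →+ (ι → ℝ) :=
  (Int.castAddHom ℝ).compLeft ι

theorem latticeEmbedding_injective : Function.Injective (latticeEmbedding ι) :=
  Int.cast_injective.comp_left

/-- The action of `ℤ^ι` on `ℝ^ι` by translations. -/
def latticeTranslation (ι : Type*) : Multiplicative (ι → ℤ) →* ((ι → ℝ) ≃ᵃ[ℝ] (ι → ℝ)) :=
  (AffineEquiv.constVAddHom ℝ (ι → ℝ)).comp (latticeEmbedding ι).toMultiplicative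

theorem latticeTranslation_apply (v : Multiplicative (ι → ℤ)) (x : ι → ℝ) :
    latticeTranslation ι v x = latticeEmbedding ι v.toAdd + x := rfl

theorem latticeTranslation_injective : Function.Injective (latticeTranslation ι) := by
  intro v w h
  have h₀ := DFunLike.congr_fun h 0
  rw [latticeTranslation_apply, latticeTranslation_apply, add_zero, add_zero] at h₀
  exact latticeEmbedding_injective h₀

variable [Fintype ι] [DecidableEq ι]

/-- The action of `GL(ι, ℤ)` on `ℝ^ι` by linear maps. -/
def integralLinear : GL ι ℤ →* ((ι → ℝ) ≃ᵃ[ℝ] (ι → ℝ)) where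
  toFun B := (LinearMap.GeneralLinearGroup.toLinearEquiv (Matrix.GeneralLinearGroup.toLin
    (Units.map (RingHom.mapMatrix (Int.castRingHom ℝ)).toMonoidHom B))).toAffineEquiv
  map_one' := by
    rw [map_one, map_one]
    rfl
  map_mul' B C := by
    rw [map_mul, map_mul]
    rfl

/-- The affine bijection `x ↦ Bx + a` of `ℝ^ι`. -/
def integralAffine (B : GL ι ℤ) (a : ι → ℝ) : (ι → ℝ) ≃ᵃ[ℝ] (ι → ℝ) :=
  (integralLinear B).trans (AffineEquiv.constVAdd ℝ (ι → ℝ) a)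

/-- The group of affine bijections of `ℝ^ι` generated by `x ↦ Bx + a` and the translations by
`ℤ^ι`. -/
def integralAffineGroup (B : GL ι ℤ) (a : ι → ℝ) : Subgroup ((ι → ℝ) ≃ᵃ[ℝ] (ι → ℝ)) :=
  Subgroup.closure ({integralAffine B a} ∪ Set.range (latticeTranslation ι))

theorem integralLinear_apply (B : GL ι ℤ) (x : ι → ℝ) :
    integralLinear B x = B.1.map (Int.castRingHom ℝ) *ᵥ x := rfl

theorem integralLinear_add (B : GL ι ℤ) (x y : ι → ℝ) :
    integralLinear B (x + y) = integralLinear B x + integralLinear B y :=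
  Matrix.mulVec_add _ x y

theorem integralLinear_smul (B : GL ι ℤ) (c : ℝ) (x : ι → ℝ) :
    integralLinear B (c • x) = c • integralLinear B x :=
  Matrix.mulVec_smul _ c x

theorem integralLinear_latticeEmbedding (B : GL ι ℤ) (v : ι → ℤ) :
    integralLinear B (latticeEmbedding ι v) = latticeEmbedding ι (B.1 *ᵥ v) :=
  funext fun i => ((Int.castRingHom ℝ).map_mulVec B.1 v i).symm

theorem integralAffine_mul_latticeTranslation_mul_inv (B : GL ι ℤ) (a : ι → ℝ)
    (v : Multiplicative (ι → ℤ)) :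
    integralAffine B a * latticeTranslation ι v * (integralAffine B a)⁻¹ =
      latticeTranslation ι (.ofAdd (B.1 *ᵥ v.toAdd)) := by
  rw [mul_inv_eq_iff_eq_mul]
  refine AffineEquiv.ext fun x => ?_
  change a + integralLinear B (latticeEmbedding ι v.toAdd + x) =
    latticeEmbedding ι (B.1 *ᵥ v.toAdd) + (a + integralLinear B x)
  rw [← integralLinear_latticeEmbedding, integralLinear_add, add_left_comm]

theorem integralAffine_zpow {B : GL ι ℤ} {a : ι → ℝ} (ha : integralLinear B a = a) (m : ℤ) :
    integralAffine B a ^ m = AffineEquiv.constVAdd ℝ (ι → ℝ) (m • a) * integralLinear (B ^ m) := by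
  have hcomm : Commute (AffineEquiv.constVAdd ℝ (ι → ℝ) a) (integralLinear B) := by
    refine AffineEquiv.ext fun x => ?_
    change a + integralLinear B x = integralLinear B (a + x)
    rw [integralLinear_add, ha]
  rw [AffineEquiv.constVAdd_zsmul, map_zpow]
  exact hcomm.mul_zpow m

theorem integralAffine_zpow_apply_zero {B : GL ι ℤ} {a : ι → ℝ} (ha : integralLinear B a = a)
    (m : ℤ) : (integralAffine B a ^ m) 0 = m • a := by
  rw [integralAffine_zpow ha]
  change m • a + integralLinear (B ^ m) 0 = m • a
  rw [integralLinear_apply, Matrix.mulVec_zero, add_zero]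

theorem integralLinear_smul_latticeEmbedding {B : GL ι ℤ} {u : ι → ℤ} (hu : B.1 *ᵥ u = u) (c : ℝ) :
    integralLinear B (c • latticeEmbedding ι u) = c • latticeEmbedding ι u := by
  rw [integralLinear_smul, integralLinear_latticeEmbedding, hu]

theorem integralAffine_zpow_natCast_mul {B : GL ι ℤ} {N : ℕ} (hN : N ≠ 0) (hBN : B ^ N = 1)
    {u : ι → ℤ} (hu : B.1 *ᵥ u = u) (c : ℤ) :
    integralAffine B ((N : ℝ)⁻¹ • latticeEmbedding ι u) ^ (N * c) =
      latticeTranslation ι (.ofAdd (c • u)) := by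
  have hNu : (N * c : ℤ) • ((N : ℝ)⁻¹ • latticeEmbedding ι u) = latticeEmbedding ι (c • u) := by
    rw [mul_comm, mul_smul, natCast_zsmul, ← Nat.cast_smul_eq_nsmul ℝ,
      smul_inv_smul₀ (Nat.cast_ne_zero.mpr hN), map_zsmul]
  rw [integralAffine_zpow (integralLinear_smul_latticeEmbedding hu _), _root_.zpow_mul,
    zpow_natCast, hBN, _root_.one_zpow, map_one, mul_one, hNu]
  rfl

theorem smul_eq_of_latticeTranslation_eq {B : GL ι ℤ} {N : ℕ} (hN : N ≠ 0) {u : ι → ℤ}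
    (hu : B.1 *ᵥ u = u) {v w : ι → ℤ} {m : ℤ}
    (h : latticeTranslation ι (.ofAdd w) = latticeTranslation ι (.ofAdd v) *
      integralAffine B ((N : ℝ)⁻¹ • latticeEmbedding ι u) ^ m) :
    N • w = N • v + m • u := by
  apply latticeEmbedding_injective
  have h₀ := DFunLike.congr_fun h 0
  rw [AffineEquiv.coe_mul, Function.comp_apply, integralAffine_zpow_apply_zero
    (integralLinear_smul_latticeEmbedding hu _), latticeTranslation_apply,
    latticeTranslation_apply, add_zero] at h₀
  have hNm : N • m • ((N : ℝ)⁻¹ • latticeEmbedding ι u) = m • latticeEmbedding ι u := by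
    rw [smul_comm, ← Nat.cast_smul_eq_nsmul ℝ, smul_inv_smul₀ (Nat.cast_ne_zero.mpr hN)]
  rw [map_nsmul, map_add, map_nsmul, map_zsmul, ← hNm, ← smul_add]
  exact congrArg (N • ·) h₀

theorem exists_latticeTranslation_coboundary_iff {Q : Type*} [AddCommGroup Q] {B : GL ι ℤ} {N : ℕ}
    (hN : N ≠ 0) (hBN : B ^ N = 1) {u : ι → ℤ} (hu : B.1 *ᵥ u = u) {p : (ι → ℤ) →+ ℤ × Q}
    (hpu : p u = (1, 0)) (hker : ∀ v, v ∈ coboundaries B.1 ↔ p v = 0) (v : ι → ℤ) (m : ℤ) :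
    (∃ w, latticeTranslation ι (.ofAdd (B.1 *ᵥ w - w)) = latticeTranslation ι (.ofAdd v) *
      integralAffine B ((N : ℝ)⁻¹ • latticeEmbedding ι u) ^ m) ↔
      N * (p v).1 + m = 0 ∧ (p v).2 = 0 := by
  have htranslate (c : ℤ) : latticeTranslation ι (.ofAdd v) *
      integralAffine B ((N : ℝ)⁻¹ • latticeEmbedding ι u) ^ (N * c) =
        latticeTranslation ι (.ofAdd (v + c • u)) := by
    rw [integralAffine_zpow_natCast_mul hN hBN hu, ofAdd_add, map_mul]
  have hpv (c : ℤ) : v + c • u ∈ coboundaries B.1 ↔ (p v).1 + c = 0 ∧ (p v).2 = 0 := by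
    rw [hker, map_add, map_zsmul, hpu]
    simp [Prod.ext_iff]
  constructor
  · rintro ⟨w, hw⟩
    have hcob : p (B.1 *ᵥ w - w) = 0 := (hker _).mp (mem_coboundaries.mpr ⟨w, rfl⟩)
    have hm : N * (p v).1 + m = 0 := by
      have h := congrArg p (smul_eq_of_latticeTranslation_eq hN hu hw)
      rw [map_add, map_nsmul, map_nsmul, map_zsmul, hcob, hpu, smul_zero] at h
      simpa [eq_comm] using congrArg Prod.fst h
    obtain rfl : m = N * -(p v).1 := by linarith
    rw [htranslate] at hw
    have hv := mem_coboundaries.mpr ⟨w, Multiplicative.ofAdd.injective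
      (latticeTranslation_injective hw)⟩
    exact ⟨hm, ((hpv _).mp hv).2⟩
  · rintro ⟨hm, hv⟩
    obtain rfl : m = N * -(p v).1 := by linarith
    obtain ⟨w, hw⟩ := mem_coboundaries.mp ((hpv (-(p v).1)).mpr ⟨by ring, hv⟩)
    exact ⟨w, by rw [hw, htranslate]⟩

theorem nonempty_abelianization_integralAffineGroup_mulEquiv {Q : Type*} [AddCommGroup Q]
    {B : GL ι ℤ} {N : ℕ} (hN : N ≠ 0) (hBN : B ^ N = 1) {u : ι → ℤ} (hu : B.1 *ᵥ u = u)
    (p : (ι → ℤ) →+ ℤ × Q) (hp : Function.Surjective p) (hpu : p u = (1, 0))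
    (hker : ∀ v, v ∈ coboundaries B.1 ↔ p v = 0) :
    Nonempty (Abelianization (integralAffineGroup B ((N : ℝ)⁻¹ • latticeEmbedding ι u)) ≃*
      Multiplicative (ℤ × Q)) := by
  let b : Multiplicative (ι → ℤ) ≃* Multiplicative (ι → ℤ) :=
    (LinearMap.GeneralLinearGroup.toLinearEquiv
      (Matrix.GeneralLinearGroup.toLin B)).toAddEquiv.toMultiplicative
  let f : (ι → ℤ) →+ ℤ × Q := ((N • AddMonoidHom.id ℤ).prodMap (.id Q)).comp p
  have hf (v : ι → ℤ) (m : ℤ) :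
      f v + m • ((1, 0) : ℤ × Q) = (N * (p v).1 + m, (p v).2) := by
    simp [f, Prod.ext_iff]
  refine nonempty_abelianization_closure_mulEquiv (b := b)
    (integralAffine_mul_latticeTranslation_mul_inv B _) f.toMultiplicative (.ofAdd (1, 0)) ?_ ?_
  · rintro ⟨m, q⟩
    obtain ⟨v, hv⟩ := hp (0, q)
    exact ⟨.ofAdd v, m, (hf v m).trans (by simp [hv])⟩
  · intro v m
    refine (exists_latticeTranslation_coboundary_iff hN hBN hu hpu hker v.toAdd m).trans ?_
    rw [← Prod.mk_eq_zero, ← hf]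
    rfl

end AffineGroups

section RecursiveBlocks

theorem exists_Jmat_succ_eq_reindex (r : ℕ) : ∃ e : Fin (2 ^ r) ⊕ Fin (2 ^ r) ≃ Fin (2 ^ (r + 1)),
    Jmat (r + 1) = Matrix.reindex e e (Matrix.fromBlocks 0 (Jmat r) 1 0) :=
  ⟨_, rfl⟩

theorem Jmat_zero : Jmat 0 = -1 := by
  decide

theorem mem_coboundaries_Jmat {r : ℕ} {v : Fin (2 ^ r) → ℤ} :
    v ∈ coboundaries (Jmat r) ↔ Even (∑ i, v i) := by
  induction r with
  | zero =>
    have hv : ∑ i, v i = v 0 := Fin.sum_univ_one v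
    rw [hv, mem_coboundaries]
    constructor
    · rintro ⟨w, rfl⟩
      simp [Jmat_zero, Matrix.neg_mulVec, ← neg_add', ← two_mul]
    · rintro ⟨c, hc⟩
      refine ⟨fun _ => -c, funext fun i => ?_⟩
      obtain rfl : i = 0 := Fin.eq_zero i
      simp [Jmat_zero, Matrix.neg_mulVec, hc]
  | succ r ih =>
    obtain ⟨e, he⟩ := exists_Jmat_succ_eq_reindex r
    rw [he, mem_coboundaries_reindex, mem_coboundaries_fromBlocks_zero, ih,
      ← Equiv.sum_comp e v, Fintype.sum_sum_type]
    simp [Finset.sum_add_distrib]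

theorem fromBlocks_zero_pow_two_mul {ι R : Type*} [Fintype ι] [DecidableEq ι] [CommRing R]
    (M : Matrix ι ι R) (k : ℕ) :
    Matrix.fromBlocks 0 M 1 0 ^ (2 * k) = Matrix.fromBlocks (M ^ k) 0 0 (M ^ k) := by
  have hsq : Matrix.fromBlocks 0 M 1 0 ^ 2 = Matrix.fromBlocks M 0 0 M := by
    simp [sq, Matrix.fromBlocks_multiply]
  rw [pow_mul, hsq, Matrix.fromBlocks_diagonal_pow]

theorem Jmat_pow_two_pow (r : ℕ) : Jmat r ^ 2 ^ r = -1 := by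
  induction r with
  | zero => rw [Jmat_zero, pow_zero, pow_one]
  | succ r ih =>
    obtain ⟨e, he⟩ := exists_Jmat_succ_eq_reindex r
    have hpow : Matrix.fromBlocks 0 (Jmat r) (1 : Matrix (Fin (2 ^ r)) (Fin (2 ^ r)) ℤ) 0 ^
        2 ^ (r + 1) = -1 := by
      rw [pow_succ', fromBlocks_zero_pow_two_mul, ih, ← Matrix.fromBlocks_one,
        Matrix.fromBlocks_neg, neg_zero]
    rw [he, ← Matrix.coe_reindexAlgEquiv ℤ, ← map_pow, hpow, map_neg, map_one]

end RecursiveBlocks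

section Shift

/-- The companion matrix of `X ^ n + 1`. It shifts coordinates by one place, with a change of sign
when passing from the last one to the first; `Cmat r` is the case `n = 2 ^ r`. -/
def negacyclicShift (n : ℕ) : Matrix (Fin n) (Fin n) ℤ :=
  Matrix.of fun i j =>
    if (i : ℕ) = (j : ℕ) + 1 then 1
    else if (i : ℕ) = 0 ∧ (j : ℕ) = n - 1 then -1
    else 0

variable {n : ℕ}

theorem negacyclicShift_mulVec_zero (x : Fin (n + 1) → ℤ) :
    (negacyclicShift (n + 1) *ᵥ x) 0 = -x (Fin.last n) := by
  simp only [negacyclicShift, Matrix.mulVec, dotProduct, Matrix.of_apply]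
  rw [Finset.sum_eq_single (Fin.last n)]
  · simp
  · intro j _ hj
    have hjn : (j : ℕ) ≠ n := fun h => hj (Fin.ext h)
    simp [hjn]
  · simp

theorem negacyclicShift_mulVec_succ (x : Fin (n + 1) → ℤ) (i : Fin n) :
    (negacyclicShift (n + 1) *ᵥ x) i.succ = x i.castSucc := by
  simp only [negacyclicShift, Matrix.mulVec, dotProduct, Matrix.of_apply]
  rw [Finset.sum_eq_single i.castSucc]
  · simp
  · intro j _ hj
    have hij : (i : ℕ) ≠ j := fun h => hj (Fin.ext h.symm)
    simp [hij]
  · simp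

theorem mem_coboundaries_negacyclicShift_succ {v : Fin (n + 1) → ℤ} :
    v ∈ coboundaries (negacyclicShift (n + 1)) ↔ Even (∑ i, v i) := by
  rw [mem_coboundaries]
  constructor
  · rintro ⟨w, rfl⟩
    refine ⟨-w (Fin.last n), ?_⟩
    simp only [Pi.sub_apply, Finset.sum_sub_distrib, Fin.sum_univ_succ (negacyclicShift _ *ᵥ w),
      Fin.sum_univ_castSucc w, negacyclicShift_mulVec_zero, negacyclicShift_mulVec_succ]
    ring
  · rintro ⟨s, hs⟩
    -- Coordinates `i ≠ 0` force `w i = w 0 + v 0 - ∑ j ≤ i, v j`; coordinate `0` then says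
    -- `2 * (w 0 + v 0) = ∑ j, v j`.
    refine ⟨fun i => s - ∑ j ≤ i, v j, funext fun i => ?_⟩
    cases i using Fin.cases with
    | zero =>
      have h₀ : Finset.Iic (0 : Fin (n + 1)) = {0} := Finset.Iic_bot
      have hlast : Finset.Iic (Fin.last n) = Finset.univ := Finset.Iic_top
      simp [negacyclicShift_mulVec_zero, h₀, hlast, hs]
    | succ i =>
      have hIic : Finset.Iic i.succ = insert i.succ (Finset.Iic i.castSucc) := by
        ext j
        simp only [Finset.mem_Iic, Fin.le_def, Fin.val_succ, Finset.mem_insert, Fin.ext_iff,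
          Fin.val_castSucc]
        omega
      simp [negacyclicShift_mulVec_succ, hIic]

theorem negacyclicShift_pow_mulVec_single (i : Fin (n + 1)) :
    negacyclicShift (n + 1) ^ (i : ℕ) *ᵥ Pi.single 0 1 = Pi.single i 1 := by
  induction i using Fin.induction with
  | zero => rw [Fin.val_zero, pow_zero, Matrix.one_mulVec]
  | succ i ih =>
    rw [Fin.val_succ, pow_succ', ← Matrix.mulVec_mulVec, ← Fin.val_castSucc, ih]
    funext j
    cases j using Fin.cases with
    | zero => simp [negacyclicShift_mulVec_zero, (Fin.castSucc_lt_last i).ne']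
    | succ j => simp [negacyclicShift_mulVec_succ, Pi.single_apply, Fin.ext_iff]

theorem negacyclicShift_succ_pow_self : negacyclicShift (n + 1) ^ (n + 1) = -1 := by
  have hzero : negacyclicShift (n + 1) ^ (n + 1) *ᵥ Pi.single 0 1 = -Pi.single 0 1 := by
    have hlast := negacyclicShift_pow_mulVec_single (Fin.last n)
    rw [Fin.val_last] at hlast
    rw [pow_succ', ← Matrix.mulVec_mulVec, hlast]
    funext j
    cases j using Fin.cases with
    | zero => simp [negacyclicShift_mulVec_zero]
    | succ j => simp [negacyclicShift_mulVec_succ, (Fin.castSucc_lt_last j).ne]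
  apply Matrix.ext_of_mulVec_single
  intro i
  rw [← negacyclicShift_pow_mulVec_single i, Matrix.mulVec_mulVec, pow_mul_comm,
    ← Matrix.mulVec_mulVec, hzero, Matrix.mulVec_neg, Matrix.neg_mulVec, Matrix.one_mulVec]

theorem mem_coboundaries_negacyclicShift [NeZero n] {v : Fin n → ℤ} :
    v ∈ coboundaries (negacyclicShift n) ↔ Even (∑ i, v i) := by
  obtain ⟨n, rfl⟩ := Nat.exists_eq_succ_of_ne_zero (NeZero.ne n)
  exact mem_coboundaries_negacyclicShift_succ

theorem negacyclicShift_pow_self [NeZero n] : negacyclicShift n ^ n = -1 := by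
  obtain ⟨n, rfl⟩ := Nat.exists_eq_succ_of_ne_zero (NeZero.ne n)
  exact negacyclicShift_succ_pow_self

theorem mem_coboundaries_Cmat {r : ℕ} {v : Fin (2 ^ r) → ℤ} :
    v ∈ coboundaries (Cmat r) ↔ Even (∑ i, v i) :=
  mem_coboundaries_negacyclicShift

theorem Cmat_pow_two_pow (r : ℕ) : Cmat r ^ 2 ^ r = -1 :=
  negacyclicShift_pow_self

end Shift

section BlockDiagonal

variable {X : Type*} {s : X → Type*} [∀ x, Fintype (s x)]

/-- The map to the coinvariants of a block-diagonal action on `ℤ^(Σ x, s x)` whose block at `x₀` is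
the trivial one, with `i₀` as its only coordinate, and whose other blocks have coinvariants `ℤ/2`,
given by the parity of the sum of the coordinates. -/
def blockCoinvariants (x₀ : X) (i₀ : s x₀) :
    ((Σ x, s x) → ℤ) →+ ℤ × ({x // x ≠ x₀} → ZMod 2) where
  toFun v := (v ⟨x₀, i₀⟩, fun x => ((∑ i, v ⟨x, i⟩ : ℤ) : ZMod 2))
  map_zero' := by simp [Prod.ext_iff, funext_iff]
  map_add' v w := by simp [Prod.ext_iff, funext_iff, Finset.sum_add_distrib]

theorem blockCoinvariants_apply (x₀ : X) (i₀ : s x₀) (v : (Σ x, s x) → ℤ) :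
    blockCoinvariants x₀ i₀ v =
      (v ⟨x₀, i₀⟩, fun x : {x // x ≠ x₀} => ((∑ i, v ⟨x, i⟩ : ℤ) : ZMod 2)) := rfl

variable {x₀ : X} {i₀ : s x₀}

theorem blockCoinvariants_single [DecidableEq (Σ x, s x)] :
    blockCoinvariants x₀ i₀ (Pi.single ⟨x₀, i₀⟩ 1) = (1, 0) := by
  rw [blockCoinvariants_apply, Pi.single_eq_same]
  congr 1
  funext x
  have hx (i : s x) : (⟨x, i⟩ : Σ x, s x) ≠ ⟨x₀, i₀⟩ := fun h => x.2 (congrArg Sigma.fst h)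
  simp [hx]

theorem blockCoinvariants_surjective [∀ x, Nonempty (s x)] [Subsingleton (s x₀)] :
    Function.Surjective (blockCoinvariants x₀ i₀) := by
  classical
  rintro ⟨m, q⟩
  choose z hz using fun x => ZMod.intCast_surjective (q x)
  let c (x : X) : s x := Classical.arbitrary (s x)
  refine ⟨fun p => if p.2 = c p.1 then if h : p.1 = x₀ then m else z ⟨p.1, h⟩ else 0, ?_⟩
  rw [blockCoinvariants_apply]
  congr 1
  · simp [Subsingleton.elim i₀ (c x₀)]
  · funext x
    simp [x.2, hz]

variable [DecidableEq X] [∀ x, DecidableEq (s x)] {M : ∀ x, Matrix (s x) (s x) ℤ}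

theorem mem_coboundaries_blockDiagonal'_iff_blockCoinvariants_eq_zero [Fintype X]
    [Subsingleton (s x₀)]
    (hM₀ : M x₀ = 1)
    (hM : ∀ x ≠ x₀, ∀ v : s x → ℤ, v ∈ coboundaries (M x) ↔ Even (∑ i, v i))
    {v : (Σ x, s x) → ℤ} :
    v ∈ coboundaries (Matrix.blockDiagonal' M) ↔ blockCoinvariants x₀ i₀ v = 0 := by
  have htrivial : (fun i => v ⟨x₀, i⟩) ∈ coboundaries (M x₀) ↔ v ⟨x₀, i₀⟩ = 0 := by
    rw [hM₀, mem_coboundaries_one]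
    exact ⟨fun h => congrFun h i₀, fun h => funext fun i => Subsingleton.elim i₀ i ▸ h⟩
  rw [mem_coboundaries_blockDiagonal', blockCoinvariants_apply, Prod.mk_eq_zero, ← htrivial,
    funext_iff, Subtype.forall]
  simp only [Pi.zero_apply, ZMod.intCast_eq_zero_iff_even]
  constructor
  · exact fun h => ⟨h x₀, fun x hx => (hM x hx _).mp (h x)⟩
  · rintro ⟨h₀, h⟩ x
    obtain rfl | hx := eq_or_ne x x₀
    exacts [h₀, (hM x hx _).mpr (h x hx)]

theorem blockDiagonal'_mulVec_single [Fintype X] (hM₀ : M x₀ = 1) :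
    Matrix.blockDiagonal' M *ᵥ Pi.single ⟨x₀, i₀⟩ 1 = Pi.single ⟨x₀, i₀⟩ 1 := by
  rw [Matrix.mulVec_single_one]
  ext ⟨x, i⟩
  obtain rfl | hx := eq_or_ne x x₀
  · simp [hM₀, Matrix.one_apply, Pi.single_apply]
  · have hne : (⟨x, i⟩ : Σ x, s x) ≠ ⟨x₀, i₀⟩ := fun h => hx (congrArg Sigma.fst h)
    simp [Matrix.blockDiagonal'_apply_ne _ _ _ hx, hne]

variable {ι : Type*} [Fintype ι] [DecidableEq ι]

theorem pow_eq_one_of_eq_reindex_blockDiagonal' [Finite X] {B : GL ι ℤ} {e : (Σ x, s x) ≃ ι} {N : ℕ}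
    (hB : B.1 = Matrix.reindex e e (Matrix.blockDiagonal' M)) (hMN : ∀ x, M x ^ N = 1) :
    B ^ N = 1 := by
  have := Fintype.ofFinite X
  have hM : M ^ N = 1 := funext hMN
  apply Units.ext
  rw [Units.val_pow_eq_pow_val, hB, ← Matrix.coe_reindexAlgEquiv ℤ, ← map_pow,
    ← Matrix.blockDiagonal'_pow, hM, Matrix.blockDiagonal'_one, map_one, Units.val_one]

theorem nonempty_abelianization_blockDiagonal'_mulEquiv [Finite X]
    [∀ x, Nonempty (s x)] [Subsingleton (s x₀)] {B : GL ι ℤ} (e : (Σ x, s x) ≃ ι)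
    (hB : B.1 = Matrix.reindex e e (Matrix.blockDiagonal' M)) {N : ℕ} (hN : N ≠ 0)
    (hMN : ∀ x, M x ^ N = 1) (hM₀ : M x₀ = 1)
    (hM : ∀ x ≠ x₀, ∀ v : s x → ℤ, v ∈ coboundaries (M x) ↔ Even (∑ i, v i)) :
    Nonempty (Abelianization (integralAffineGroup B (Pi.single (e ⟨x₀, i₀⟩) (N : ℝ)⁻¹)) ≃*
      Multiplicative (ℤ × ({x // x ≠ x₀} → ZMod 2))) := by
  have := Fintype.ofFinite X
  let u : ι → ℤ := Pi.single (e ⟨x₀, i₀⟩) 1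
  have hue : u ∘ e = Pi.single ⟨x₀, i₀⟩ 1 := by
    rw [Pi.single_comp_equiv, e.symm_apply_apply]
  have hu : B.1 *ᵥ u = u := by
    rw [← e.surjective.right_cancellable, hB, Matrix.reindex_apply, Matrix.submatrix_mulVec_equiv,
      Equiv.symm_symm, hue, blockDiagonal'_mulVec_single hM₀]
    simp [Function.comp_assoc]
  have hsmul : (N : ℝ)⁻¹ • latticeEmbedding ι u = Pi.single (e ⟨x₀, i₀⟩) (N : ℝ)⁻¹ := by
    ext i
    simp [latticeEmbedding, u, Pi.single_apply]
  let p : (ι → ℤ) →+ ℤ × ({x // x ≠ x₀} → ZMod 2) :=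
    (blockCoinvariants x₀ i₀).comp (LinearMap.funLeft ℤ ℤ e).toAddMonoidHom
  rw [← hsmul]
  refine nonempty_abelianization_integralAffineGroup_mulEquiv hN
    (pow_eq_one_of_eq_reindex_blockDiagonal' hB hMN) hu p ?_ ?_ fun v => ?_
  · exact blockCoinvariants_surjective.comp
      (LinearMap.funLeft_surjective_of_injective ℤ ℤ _ e.injective)
  · exact (congrArg _ hue).trans blockCoinvariants_single
  · rw [hB, mem_coboundaries_reindex]
    exact mem_coboundaries_blockDiagonal'_iff_blockCoinvariants_eq_zero hM₀ hM

end BlockDiagonal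

section BlockMat

variable {r : ℕ} {k k' : ℕ → ℕ} {j₁ : ℕ}

instance instNeZeroBlockSize (x : BlockIx r k k' j₁) : NeZero (blockSize r k k' j₁ x) := by
  rcases x with _ | _ | _ <;> exact NeZero.pow

theorem mem_coboundaries_blockMat {x : BlockIx r k k' j₁} (hx : x ≠ .inr (.inr ()))
    {v : Fin (blockSize r k k' j₁ x) → ℤ} :
    v ∈ coboundaries (blockMat r k k' j₁ x) ↔ Even (∑ i, v i) := by
  rcases x with ⟨i, x | x⟩ | x | x
  exacts [mem_coboundaries_Cmat, mem_coboundaries_Jmat, mem_coboundaries_Jmat, absurd rfl hx]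

theorem pow_two_pow_eq_one_of_pow_two_pow_eq_neg_one {R : Type*} [Ring R] {a : R} {m r : ℕ}
    (hmr : m < r) (ha : a ^ 2 ^ m = -1) : a ^ 2 ^ r = 1 := by
  obtain ⟨d, rfl⟩ := Nat.exists_eq_add_of_lt hmr
  rw [add_assoc, pow_add, pow_mul, ha, pow_succ', pow_mul, neg_one_sq, one_pow]

theorem blockMat_pow_two_pow (hr : 2 ≤ r) (x : BlockIx r k k' j₁) :
    blockMat r k k' j₁ x ^ 2 ^ r = 1 := by
  rcases x with ⟨i, x | x⟩ | x | x
  · exact pow_two_pow_eq_one_of_pow_two_pow_eq_neg_one (by omega) (Cmat_pow_two_pow _)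
  · exact pow_two_pow_eq_one_of_pow_two_pow_eq_neg_one (by omega) (Jmat_pow_two_pow _)
  · exact pow_two_pow_eq_one_of_pow_two_pow_eq_neg_one hr (Jmat_pow_two_pow _)
  · exact one_pow _

theorem card_blockIx_ne {j : ℕ → ℕ} (hr : 2 ≤ r)
    (hj : ∀ i, 2 ≤ i → i ≤ r - 1 → j i = k i + k' i) :
    Fintype.card {x : BlockIx r k k' (j 1) // x ≠ .inr (.inr ())} =
      ∑ i ∈ Finset.Icc 1 (r - 1), j i := by
  obtain ⟨s, rfl⟩ := Nat.exists_eq_add_of_le' hr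
  have hIcc : Finset.Icc 1 (s + 2 - 1) = Finset.Ico 1 (s + 2) := rfl
  have hsum : ∑ i ∈ Finset.Icc 1 (s + 2 - 1), j i =
      j 1 + ∑ i : Fin s, (k (i + 2) + k' (i + 2)) := by
    rw [hIcc, Finset.sum_eq_sum_Ico_succ_bot (by omega), Finset.sum_Ico_eq_sum_range,
      ← Fin.sum_univ_eq_sum_range fun i => j (1 + 1 + i)]
    refine congrArg _ (Finset.sum_congr rfl fun i _ => ?_)
    rw [← hj (i + 2) (by omega) (by omega), add_comm]
  have hcard : Fintype.card (BlockIx (s + 2) k k' (j 1)) =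
      ∑ i : Fin s, (k (i + 2) + k' (i + 2)) + (j 1 + 1) := by
    simp only [Fintype.card_sum, Fintype.card_sigma, Fintype.card_fin, Fintype.card_unit]
    rfl
  rw [hsum, Fintype.card_subtype_compl, Fintype.card_subtype_eq, hcard]
  omega

end BlockMat

theorem abelianization_of_Z2r_manifold_group_general {ι : Type*} [Fintype ι] [DecidableEq ι]
    (r : ℕ) (hr : 2 ≤ r) (k k' j : ℕ → ℕ)
    (hj : ∀ i, 2 ≤ i → i ≤ r - 1 → j i = k i + k' i) (B : GL ι ℤ)
    (e : (Σ x : BlockIx r k k' (j 1), Fin (blockSize r k k' (j 1) x)) ≃ ι) (l : ι)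
    (he : e ⟨Sum.inr (Sum.inr ()), ⟨0, Nat.one_pos⟩⟩ = l)
    (hB : (B : Matrix ι ι ℤ) =
      Matrix.reindex e e (Matrix.blockDiagonal' (blockMat r k k' (j 1)))) :
    Nonempty (Abelianization (integralAffineGroup B (Pi.single l ((2 : ℝ) ^ r)⁻¹)) ≃*
      Multiplicative (ℤ × (Fin (∑ i ∈ Finset.Icc 1 (r - 1), j i) → ZMod 2))) := by
  have hsub : Subsingleton (Fin (blockSize r k k' (j 1) (.inr (.inr ())))) :=
    inferInstanceAs (Subsingleton (Fin 1))
  obtain ⟨φ⟩ := nonempty_abelianization_blockDiagonal'_mulEquiv (i₀ := ⟨0, Nat.one_pos⟩) e hB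
    (pow_ne_zero r two_ne_zero) (blockMat_pow_two_pow hr) rfl fun x hx _ =>
      mem_coboundaries_blockMat hx
  let ψ := LinearEquiv.funCongrLeft ℤ (ZMod 2)
    (Fintype.equivFinOfCardEq (card_blockIx_ne hr hj)).symm
  rw [he, Nat.cast_pow, Nat.cast_ofNat] at φ
  exact ⟨φ.trans ((AddEquiv.refl ℤ).prodCongr ψ.toAddEquiv).toMultiplicative⟩

/-- **First homology of the `ℤ_{2^r}`-manifolds `M_{k(r)}` in the family `𝓕`.**
With `B` the block-diagonal matrix above (of size `n = 2^{r−1} j_{r−1} + ⋯ + 4 j_2 + 2 j_1 + 1`,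
the final `1 × 1` block sitting in the last coordinate), and `Γ` the Bieberbach group generated
by `γ : x ↦ Bx + (1/2^r) eₙ` and the translations by `ℤ^n`, the abelianization of `Γ`
(that is, `H₁(M, ℤ)` for `M = Γ\ℝ^n`) is `ℤ × (ℤ/2ℤ)^{j_{r−1} + ⋯ + j_2 + j_1}`. -/
theorem abelianization_of_Z2r_manifold_group
    (r : ℕ) (hr : 2 ≤ r) (k k' j : ℕ → ℕ)
    (hj : ∀ i, 2 ≤ i → i ≤ r - 1 → j i = k i + k' i)
    (hj1 : Odd (j 1)) (hj1pos : 1 ≤ j 1) (hjr : 1 ≤ j (r - 1))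
    (n : ℕ) (hn : n = (∑ i ∈ Finset.Icc 1 (r - 1), 2 ^ i * j i) + 1)
    (B : GL (Fin n) ℤ)
    (e : (Σ x : BlockIx r k k' (j 1), Fin (blockSize r k k' (j 1) x)) ≃ Fin n)
    (he : e ⟨Sum.inr (Sum.inr ()), ⟨0, Nat.one_pos⟩⟩ = ⟨n - 1, by omega⟩)
    (hB : (B : Matrix (Fin n) (Fin n) ℤ) =
      Matrix.reindex e e (Matrix.blockDiagonal' (blockMat r k k' (j 1)))) :
    let Bℝ : GL (Fin n) ℝ := Units.map (RingHom.mapMatrix (Int.castRingHom ℝ)).toMonoidHom B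
    let γ : (Fin n → ℝ) ≃ᵃ[ℝ] (Fin n → ℝ) :=
      (LinearMap.GeneralLinearGroup.toLinearEquiv
        (Matrix.GeneralLinearGroup.toLin Bℝ)).toAffineEquiv.trans
        (AffineEquiv.constVAdd ℝ (Fin n → ℝ)
          (Pi.single (⟨n - 1, by omega⟩ : Fin n) (((2 : ℝ) ^ r)⁻¹)))
    let Γ : Subgroup ((Fin n → ℝ) ≃ᵃ[ℝ] (Fin n → ℝ)) :=
      Subgroup.closure ({γ} ∪
        Set.range (fun v : Fin n → ℤ =>
          AffineEquiv.constVAdd ℝ (Fin n → ℝ) (fun i => (v i : ℝ))))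
    Nonempty (Abelianization Γ ≃*
      Multiplicative (ℤ × (Fin (∑ i ∈ Finset.Icc 1 (r - 1), j i) → ZMod 2))) :=
  abelianization_of_Z2r_manifold_group_general r hr k k' j hj B e _ he hB
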